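/- arXiv:1609.08066 — 2 statements merged into one kernel-verified Lean document; each statement's English description precedes it below -/
import Mathlib

section
/- Let n ≥ 2 and let γₙ be the probability measure on ℝⁿ given by the product of n copies of the standard Gaussian measure N(0,1). Then the expectation of the maximum absolute coordinate satisfies ∫ max_{1 ≤ j ≤ n} |g_j| dγₙ(g) ≤ √(2 log n). -/
open MeasureTheory ProbabilityTheory

/-!
For any level `c`, `max_j a j ≤ c + ∑ j, (a j - c)⁺`.

Write `φ` for the standard normal density, `Q` for its upper tail and `h = φ / Q`. Taking for `c`
the constant `t` with `2 n Q t = 1` bounds the expectation of the maximum by `2 n φ t = h t`, so it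
is enough that `h t ^ 2 ≤ -2 log (2 Q t)`. The difference of the two sides has derivative
`2 h (1 - deriv h)`, and `1 - deriv h` is the variance of a normal variable conditioned to exceed
`t`; hence the inequality propagates upwards from `t = 9 / 8`, where it is checked numerically. This
point lies below the relevant `t` as soon as `n ≥ 4`.

For `n = 2, 3` no deterministic level suffices, and `c = |g i|` is used instead: the pairwise
maxima are computed exactly from `2 max |a| |b| = |a + b| + |a - b|`.
-/

section StandardNormal

local notation "φ" => gaussianPDFReal 0 1

lemma gaussianPDFReal_zero_one_apply (x : ℝ) :
    φ x = (√(2 * Real.pi))⁻¹ * Real.exp (-(x ^ 2 / 2)) := by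
  simp [gaussianPDFReal, neg_div]

lemma hasDerivAt_gaussianPDFReal_zero_one (x : ℝ) : HasDerivAt φ (-(x * φ x)) x := by
  have hexponent : HasDerivAt (fun y : ℝ ↦ -(y ^ 2 / 2)) (-x) x :=
    ((hasDerivAt_pow 2 x).div_const 2).neg.congr_deriv (by push_cast; ring)
  rw [funext gaussianPDFReal_zero_one_apply]
  exact (hexponent.exp.const_mul _).congr_deriv (by ring)

lemma continuous_gaussianPDFReal_zero_one : Continuous φ :=
  continuous_iff_continuousAt.2 fun x ↦ (hasDerivAt_gaussianPDFReal_zero_one x).continuousAt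

lemma integrable_pow_mul_gaussianPDFReal_zero_one (k : ℕ) : Integrable fun x ↦ x ^ k * φ x := by
  have hexp := (integrable_rpow_mul_exp_neg_mul_sq (b := 1 / 2) (by norm_num) (s := k)
    (by linarith [k.cast_nonneg (α := ℝ)])).const_mul (√(2 * Real.pi))⁻¹
  refine hexp.congr (.of_forall fun x ↦ ?_)
  simp only [Real.rpow_natCast, gaussianPDFReal_zero_one_apply]
  ring_nf

lemma integrable_pow_succ_sub_mul_gaussianPDFReal_zero_one (k : ℕ) :
    Integrable fun x ↦ (x ^ (k + 1) - k * x ^ (k - 1)) * φ x :=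
  ((integrable_pow_mul_gaussianPDFReal_zero_one (k + 1)).sub
    ((integrable_pow_mul_gaussianPDFReal_zero_one (k - 1)).const_mul (k : ℝ))).congr
    (.of_forall fun x ↦ by simp only [Pi.sub_apply]; ring)

-- For `k = 0` the truncated exponent `k - 1` is harmless, its coefficient being `0`.
lemma integral_Ioi_pow_succ_sub_mul_gaussianPDFReal_zero_one (k : ℕ) (t : ℝ) :
    ∫ x in Set.Ioi t, (x ^ (k + 1) - k * x ^ (k - 1)) * φ x = t ^ k * φ t := by
  have hderiv (x : ℝ) :
      HasDerivAt (fun y ↦ -(y ^ k * φ y)) ((x ^ (k + 1) - k * x ^ (k - 1)) * φ x) x :=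
    ((hasDerivAt_pow k x).mul (hasDerivAt_gaussianPDFReal_zero_one x)).neg.congr_deriv (by ring)
  have hint : IntegrableOn (fun x ↦ (x ^ (k + 1) - k * x ^ (k - 1)) * φ x) (Set.Ioi t) :=
    (integrable_pow_succ_sub_mul_gaussianPDFReal_zero_one k).integrableOn
  have hlim := tendsto_zero_of_hasDerivAt_of_integrableOn_Ioi (fun x _ ↦ hderiv x) hint
    (integrable_pow_mul_gaussianPDFReal_zero_one k).neg.integrableOn
  rw [integral_Ioi_of_hasDerivAt_of_tendsto' (fun x _ ↦ hderiv x) hint hlim, zero_sub, neg_neg]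

lemma integral_Ioi_id_mul_gaussianPDFReal_zero_one (t : ℝ) :
    ∫ x in Set.Ioi t, x * φ x = φ t := by
  simpa using integral_Ioi_pow_succ_sub_mul_gaussianPDFReal_zero_one 0 t

/-- The upper tail `P(Z > t)` of a standard normal variable `Z`, as an integral of its density. -/
noncomputable def gaussianTail (t : ℝ) : ℝ := ∫ x in Set.Ioi t, φ x

lemma gaussianTail_pos (t : ℝ) : 0 < gaussianTail t := by
  have hsupport : Function.support φ = Set.univ :=
    Set.eq_univ_of_forall fun x ↦ (gaussianPDFReal_pos 0 1 x one_ne_zero).ne'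
  rw [gaussianTail, setIntegral_pos_iff_support_of_nonneg_ae
    (.of_forall (gaussianPDFReal_nonneg 0 1)) (integrable_gaussianPDFReal 0 1).integrableOn,
    hsupport]
  simp

lemma gaussianTail_zero : gaussianTail 0 = 1 / 2 := by
  have hsymm : ∫ x, φ |x| = 2 * gaussianTail 0 := integral_comp_abs
  have habs (x : ℝ) : φ |x| = φ x := by simp only [gaussianPDFReal_zero_one_apply, sq_abs]
  simp only [habs, integral_gaussianPDFReal_eq_one 0 one_ne_zero] at hsymm
  linarith

lemma gaussianTail_eq_half_sub (t : ℝ) : gaussianTail t = 1 / 2 - ∫ x in (0 : ℝ)..t, φ x := by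
  have hφ := integrable_gaussianPDFReal 0 1
  rw [← gaussianTail_zero, ← intervalIntegral.integral_Ioi_sub_Ioi' hφ.integrableOn hφ.integrableOn,
    gaussianTail, gaussianTail, sub_sub_cancel]

lemma hasDerivAt_gaussianTail (t : ℝ) : HasDerivAt gaussianTail (-φ t) t := by
  have hφ := continuous_gaussianPDFReal_zero_one
  rw [funext gaussianTail_eq_half_sub]
  exact (intervalIntegral.integral_hasDerivAt_right (hφ.intervalIntegrable _ _)
    (hφ.stronglyMeasurableAtFilter _ _) hφ.continuousAt).const_sub _

lemma continuous_gaussianTail : Continuous gaussianTail :=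
  continuous_iff_continuousAt.2 fun t ↦ (hasDerivAt_gaussianTail t).continuousAt

lemma exists_ge_gaussianTail_eq {a p : ℝ} (hp : 0 < p) (hpa : p ≤ gaussianTail a) :
    ∃ t ≥ a, gaussianTail t = p := by
  have hlim : Filter.Tendsto gaussianTail Filter.atTop (nhds 0) :=
    tendsto_integral_Ioi_zero Filter.tendsto_id
  obtain ⟨b, hbp, hab⟩ := ((hlim.eventually_lt_const hp).and (Filter.eventually_ge_atTop a)).exists
  obtain ⟨t, ht, htp⟩ :=
    intermediate_value_Icc' hab continuous_gaussianTail.continuousOn ⟨hbp.le, hpa⟩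
  exact ⟨t, ht.1, htp⟩

/-- The hazard rate (inverse Mills ratio) of the standard normal law: its density divided by its
upper tail, which is also the mean of a standard normal variable conditioned to exceed `t`. -/
noncomputable def gaussianHazard (t : ℝ) : ℝ := φ t / gaussianTail t

lemma gaussianHazard_pos (t : ℝ) : 0 < gaussianHazard t :=
  div_pos (gaussianPDFReal_pos 0 1 t one_ne_zero) (gaussianTail_pos t)

lemma gaussianHazard_mul_gaussianTail (t : ℝ) : gaussianHazard t * gaussianTail t = φ t :=
  div_mul_cancel₀ _ (gaussianTail_pos t).ne'

lemma hasDerivAt_gaussianHazard (t : ℝ) :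
    HasDerivAt gaussianHazard (gaussianHazard t * (gaussianHazard t - t)) t := by
  have hQ := (gaussianTail_pos t).ne'
  refine ((hasDerivAt_gaussianPDFReal_zero_one t).div (hasDerivAt_gaussianTail t) hQ).congr_deriv ?_
  rw [gaussianHazard]
  field_simp
  ring

lemma integral_Ioi_sub_gaussianHazard_sq (t : ℝ) :
    ∫ x in Set.Ioi t, (x - gaussianHazard t) ^ 2 * φ x =
      gaussianTail t * (1 - gaussianHazard t * (gaussianHazard t - t)) := by
  set h := gaussianHazard t with h_def
  have hexpand (x : ℝ) : (x - h) ^ 2 * φ x =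
      (x ^ 2 - 1) * φ x - 2 * h * (x * φ x) + (1 + h ^ 2) * φ x := by ring
  have hsecond : ∫ x in Set.Ioi t, (x ^ 2 - 1) * φ x = t * φ t := by
    simpa using integral_Ioi_pow_succ_sub_mul_gaussianPDFReal_zero_one 1 t
  have hsecond_int : Integrable fun x ↦ (x ^ 2 - 1) * φ x := by
    simpa using integrable_pow_succ_sub_mul_gaussianPDFReal_zero_one 1
  have hfirst_int : Integrable fun x ↦ 2 * h * (x * φ x) := by
    simpa using (integrable_pow_mul_gaussianPDFReal_zero_one 1).const_mul (2 * h)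
  have hdiff_int : Integrable fun x ↦ (x ^ 2 - 1) * φ x - 2 * h * (x * φ x) :=
    hsecond_int.sub hfirst_int
  simp only [hexpand]
  rw [integral_add hdiff_int.integrableOn
      ((integrable_gaussianPDFReal 0 1).const_mul _).integrableOn,
    integral_sub hsecond_int.integrableOn hfirst_int.integrableOn, integral_const_mul,
    integral_const_mul, hsecond, integral_Ioi_id_mul_gaussianPDFReal_zero_one, ← gaussianTail,
    ← gaussianHazard_mul_gaussianTail, ← h_def]
  ring

lemma gaussianHazard_mul_sub_le_one (t : ℝ) : gaussianHazard t * (gaussianHazard t - t) ≤ 1 := by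
  have hvar : 0 ≤ ∫ x in Set.Ioi t, (x - gaussianHazard t) ^ 2 * φ x :=
    integral_nonneg fun x ↦ mul_nonneg (sq_nonneg _) (gaussianPDFReal_nonneg 0 1 x)
  rw [integral_Ioi_sub_gaussianHazard_sq] at hvar
  exact sub_nonneg.1 (nonneg_of_mul_nonneg_right hvar (gaussianTail_pos t))

lemma monotone_neg_two_mul_log_gaussianTail_sub_gaussianHazard_sq :
    Monotone fun t ↦ -2 * Real.log (2 * gaussianTail t) - gaussianHazard t ^ 2 := by
  have hderiv (t : ℝ) :
      HasDerivAt (fun s ↦ -2 * Real.log (2 * gaussianTail s) - gaussianHazard s ^ 2)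
        (2 * gaussianHazard t * (1 - gaussianHazard t * (gaussianHazard t - t))) t := by
    have hQ := gaussianTail_pos t
    have hlog := ((hasDerivAt_gaussianTail t).const_mul 2).log (by positivity)
    refine ((hlog.const_mul (-2)).sub ((hasDerivAt_gaussianHazard t).pow 2)).congr_deriv ?_
    rw [← gaussianHazard_mul_gaussianTail]
    field_simp
    ring
  refine monotone_of_hasDerivAt_nonneg hderiv fun t ↦ mul_nonneg ?_ ?_
  · linarith [gaussianHazard_pos t]
  · linarith [gaussianHazard_mul_sub_le_one t]

lemma abs_exp_neg_sq_div_two_sub_taylor_le {x : ℝ} (hx : x ^ 2 ≤ 2) :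
    |Real.exp (-(x ^ 2 / 2)) - (1 - x ^ 2 / 2 + x ^ 4 / 8 - x ^ 6 / 48)| ≤ 5 / 1536 * x ^ 8 := by
  have habs : |-(x ^ 2 / 2)| = x ^ 2 / 2 := by rw [abs_neg, abs_of_nonneg (by positivity)]
  have htaylor := Real.exp_bound (x := -(x ^ 2 / 2)) (by rw [habs]; linarith) (n := 4) (by norm_num)
  have hsum : ∑ m ∈ Finset.range 4, (-(x ^ 2 / 2)) ^ m / m.factorial =
      1 - x ^ 2 / 2 + x ^ 4 / 8 - x ^ 6 / 48 := by
    simp only [Finset.sum_range_succ, Finset.sum_range_zero, Nat.factorial]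
    push_cast
    ring
  rw [habs, hsum] at htaylor
  refine htaylor.trans_eq ?_
  simp only [Nat.factorial]
  push_cast
  ring

lemma abs_integral_exp_neg_sq_div_two_sub_taylor_le {t : ℝ} (ht : 0 ≤ t) (ht2 : t ^ 2 ≤ 2) :
    |(∫ x in (0 : ℝ)..t, Real.exp (-(x ^ 2 / 2))) - (t - t ^ 3 / 6 + t ^ 5 / 40 - t ^ 7 / 336)| ≤
      5 / 13824 * t ^ 9 := by
  have hpoly : ∫ x in (0 : ℝ)..t, (1 - x ^ 2 / 2 + x ^ 4 / 8 - x ^ 6 / 48) =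
      t - t ^ 3 / 6 + t ^ 5 / 40 - t ^ 7 / 336 := by
    rw [intervalIntegral.integral_sub, intervalIntegral.integral_add,
      intervalIntegral.integral_sub, intervalIntegral.integral_div, intervalIntegral.integral_div,
      intervalIntegral.integral_div, integral_pow, integral_pow, integral_pow, integral_one]
    · ring
    all_goals exact Continuous.intervalIntegrable (by fun_prop) _ _
  have herror : ∫ x in (0 : ℝ)..t, 5 / 1536 * x ^ 8 = 5 / 13824 * t ^ 9 := by
    rw [intervalIntegral.integral_const_mul, integral_pow]
    ring
  have herror_int : IntervalIntegrable (fun x : ℝ ↦ 5 / 1536 * x ^ 8) volume 0 t :=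
    Continuous.intervalIntegrable (by fun_prop) _ _
  rw [← hpoly, ← herror, ← intervalIntegral.integral_sub
    (Continuous.intervalIntegrable (by fun_prop) _ _)
    (Continuous.intervalIntegrable (by fun_prop) _ _), ← Real.norm_eq_abs]
  refine intervalIntegral.norm_integral_le_of_norm_le ht (.of_forall fun x hx ↦ ?_) herror_int
  have hxt : x ^ 2 ≤ t ^ 2 := pow_le_pow_left₀ hx.1.le hx.2 2
  exact abs_exp_neg_sq_div_two_sub_taylor_le (hxt.trans ht2)

lemma gaussianTail_nine_eighths_mem_Icc : gaussianTail (9 / 8) ∈ Set.Icc 0.13 0.1311 := by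
  have htaylor := abs_le.1 <|
    abs_integral_exp_neg_sq_div_two_sub_taylor_le (t := 9 / 8) (by norm_num) (by norm_num)
  have hsqrt_ge : 2.506 ≤ √(2 * Real.pi) :=
    Real.le_sqrt_of_sq_le (by linarith [Real.pi_gt_d4])
  have hsqrt_le : √(2 * Real.pi) ≤ 2.507 :=
    Real.sqrt_le_iff.2 ⟨by norm_num, by linarith [Real.pi_lt_d4]⟩
  rw [gaussianTail_eq_half_sub, funext gaussianPDFReal_zero_one_apply,
    intervalIntegral.integral_const_mul, inv_mul_eq_div]
  constructor
  · rw [le_sub_comm, div_le_iff₀ (by positivity)]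
    linarith
  · rw [sub_le_comm, le_div_iff₀ (by positivity)]
    linarith

lemma gaussianHazard_nine_eighths_sq_le : gaussianHazard (9 / 8) ^ 2 ≤ 8 / 3 := by
  have hQ := gaussianTail_nine_eighths_mem_Icc.1
  have hexp : 3.535 ≤ Real.exp (81 / 64) := by
    refine le_trans ?_ (Real.sum_le_exp_of_nonneg (by norm_num) 6)
    norm_num [Finset.sum_range_succ, Nat.factorial]
  have hφ : φ (9 / 8) ^ 2 = (2 * Real.pi * Real.exp (81 / 64))⁻¹ := by
    rw [gaussianPDFReal_zero_one_apply, mul_pow, inv_pow, Real.sq_sqrt (by positivity),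
      mul_inv (2 * Real.pi),
      ← Real.exp_nat_mul, ← Real.exp_neg]
    norm_num
  rw [gaussianHazard, div_pow, div_le_iff₀ (pow_pos (gaussianTail_pos _) 2), hφ]
  calc (2 * Real.pi * Real.exp (81 / 64))⁻¹ ≤ (2 * 3.14 * 3.535)⁻¹ := by
        gcongr
        exact Real.pi_gt_d2.le
    _ ≤ 8 / 3 * 0.13 ^ 2 := by norm_num
    _ ≤ 8 / 3 * gaussianTail (9 / 8) ^ 2 := by gcongr

lemma log_two_mul_gaussianTail_nine_eighths_le :
    Real.log (2 * gaussianTail (9 / 8)) ≤ -(4 / 3) := by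
  have hQ := gaussianTail_pos (9 / 8)
  have hcube : (2 * gaussianTail (9 / 8)) ^ 3 ≤ Real.exp (-4) := by
    calc (2 * gaussianTail (9 / 8)) ^ 3 ≤ (2 * 0.1311) ^ 3 := by
          gcongr
          exact gaussianTail_nine_eighths_mem_Icc.2
      _ ≤ (2.7182818286 ^ 4)⁻¹ := by norm_num
      _ ≤ (Real.exp 1 ^ 4)⁻¹ := by
          gcongr
          exact Real.exp_one_lt_d9.le
      _ = Real.exp (-4) := by rw [← Real.exp_nat_mul, ← Real.exp_neg]; norm_num
  have hlog := (Real.log_le_iff_le_exp (by positivity)).2 hcube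
  rw [Real.log_pow] at hlog
  push_cast at hlog
  linarith

lemma gaussianHazard_le_sqrt_neg_two_mul_log {t : ℝ} (ht : 9 / 8 ≤ t) :
    gaussianHazard t ≤ √(-2 * Real.log (2 * gaussianTail t)) := by
  have hmono := monotone_neg_two_mul_log_gaussianTail_sub_gaussianHazard_sq ht
  have hlog := log_two_mul_gaussianTail_nine_eighths_le
  have hhazard := gaussianHazard_nine_eighths_sq_le
  exact Real.le_sqrt_of_sq_le (by dsimp only at hmono; linarith)

lemma integral_posPart_abs_sub_gaussianReal {t : ℝ} (ht : 0 ≤ t) :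
    ∫ x, (|x| - t)⁺ ∂gaussianReal 0 1 = 2 * (φ t - t * gaussianTail t) := by
  have heven (x : ℝ) : φ x • (|x| - t)⁺ = (fun y ↦ (y - t)⁺ * φ y) |x| := by
    simp only [smul_eq_mul, gaussianPDFReal_zero_one_apply, sq_abs]
    ring
  have hfirst_int : Integrable fun x ↦ x * φ x := by
    simpa using integrable_pow_mul_gaussianPDFReal_zero_one 1
  rw [integral_gaussianReal_eq_integral_smul one_ne_zero]
  simp only [heven]
  rw [integral_comp_abs (f := fun y ↦ (y - t)⁺ * φ y)]
  congr 1
  calc ∫ x in Set.Ioi 0, (x - t)⁺ * φ x = ∫ x in Set.Ioi t, (x - t)⁺ * φ x := by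
        refine setIntegral_eq_of_subset_of_forall_sdiff_eq_zero measurableSet_Ioi
          (Set.Ioi_subset_Ioi ht) fun x hx ↦ ?_
        rw [posPart_eq_zero.2 (sub_nonpos.2 (not_lt.1 hx.2)), zero_mul]
    _ = ∫ x in Set.Ioi t, (x * φ x - t * φ x) := by
        refine setIntegral_congr_fun measurableSet_Ioi fun x hx ↦ ?_
        rw [posPart_eq_self.2 (sub_nonneg.2 (Set.mem_Ioi.1 hx).le), sub_mul]
    _ = φ t - t * gaussianTail t := by
        rw [integral_sub hfirst_int.integrableOn
          ((integrable_gaussianPDFReal 0 1).const_mul t).integrableOn, integral_const_mul,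
          integral_Ioi_id_mul_gaussianPDFReal_zero_one, gaussianTail]

lemma integral_abs_gaussianReal (v : NNReal) : ∫ x, |x| ∂gaussianReal 0 v = √(2 * v / Real.pi) := by
  have hstandard : ∫ x, |x| ∂gaussianReal 0 1 = √(2 / Real.pi) := by
    have h := integral_posPart_abs_sub_gaussianReal le_rfl
    simp only [sub_zero, posPart_eq_self.2 (abs_nonneg _), zero_mul] at h
    rw [h, gaussianPDFReal_zero_one_apply, Real.sqrt_mul zero_le_two,
      Real.sqrt_div zero_le_two]
    field_simp
    norm_num
  have hscale : gaussianReal 0 v = (gaussianReal 0 1).map (√v * ·) := by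
    rw [gaussianReal_map_const_mul]
    congr 1
    · simp
    · ext; simp
  rw [hscale, integral_map (by fun_prop) (by fun_prop)]
  simp only [abs_mul, abs_of_nonneg (Real.sqrt_nonneg _), integral_const_mul, hstandard]
  rw [← Real.sqrt_mul v.coe_nonneg]
  ring_nf

end StandardNormal

lemma max_abs_abs_eq_half_abs_add_add_abs_sub {α : Type*} [Field α] [LinearOrder α]
    [IsStrictOrderedRing α] (a b : α) :
    max |a| |b| = (|a + b| + |a - b|) / 2 := by
  grind

section RandomVariables

variable {Ω ι : Type*} {mΩ : MeasurableSpace Ω} {P : Measure Ω}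

lemma integrable_iSup [Finite ι] [Nonempty ι] {f : ι → Ω → ℝ} (hf : ∀ i, Integrable (f i) P) :
    Integrable (fun ω ↦ ⨆ i, f i ω) P := by
  have := Fintype.ofFinite ι
  simp only [← Finset.sup'_univ_eq_ciSup, ← Finset.sup'_apply]
  exact Finset.sup'_induction (p := (Integrable · P)) _ _ (fun _ hg₁ _ hg₂ ↦ hg₁.sup hg₂)
    fun i _ ↦ hf i

variable [Fintype ι]

lemma iSup_le_add_sum_posPart_sub [Nonempty ι] (a : ι → ℝ) (c : ℝ) :
    ⨆ i, a i ≤ c + ∑ i, (a i - c)⁺ := by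
  refine ciSup_le fun i ↦ ?_
  have hterm := Finset.single_le_sum (f := fun j ↦ (a j - c)⁺) (fun j _ ↦ posPart_nonneg _)
    (Finset.mem_univ i)
  linarith [le_posPart (a i - c)]

lemma integral_iSup_le_add_sum_integral_posPart_sub [Nonempty ι] {f : ι → Ω → ℝ} {c : Ω → ℝ}
    (hf : ∀ i, Integrable (f i) P) (hc : Integrable c P) :
    ∫ ω, ⨆ i, f i ω ∂P ≤ ∫ ω, c ω ∂P + ∑ i, ∫ ω, (f i ω - c ω)⁺ ∂P := by
  have hpos (i : ι) : Integrable (fun ω ↦ (f i ω - c ω)⁺) P := ((hf i).sub hc).pos_part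
  have hsum := integrable_finsetSum Finset.univ fun i _ ↦ hpos i
  rw [← integral_finsetSum _ fun i _ ↦ hpos i, ← integral_add hc hsum]
  exact integral_mono (integrable_iSup hf) (hc.add hsum)
    fun ω ↦ iSup_le_add_sum_posPart_sub (f · ω) (c ω)

lemma integrable_abs_of_hasLaw_gaussianReal {Y : Ω → ℝ} {μ : ℝ} {v : NNReal}
    (hY : HasLaw Y (gaussianReal μ v) P) : Integrable (fun ω ↦ |Y ω|) P := by
  have hid : Integrable id (gaussianReal μ v) :=
    memLp_one_iff_integrable.1 (memLp_id_gaussianReal 1)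
  rw [← hY.map_eq] at hid
  exact (hid.comp_aemeasurable hY.aemeasurable).abs

lemma integral_abs_of_hasLaw_gaussianReal {Y : Ω → ℝ} {v : NNReal}
    (hY : HasLaw Y (gaussianReal 0 v) P) : ∫ ω, |Y ω| ∂P = √(2 * v / Real.pi) := by
  rw [← integral_abs_gaussianReal]
  exact hY.integral_comp (f := fun x ↦ |x|) (by fun_prop)

lemma integral_max_abs_of_indepFun_gaussianReal {Y Z : Ω → ℝ} {v w : NNReal}
    (hY : HasLaw Y (gaussianReal 0 v) P) (hZ : HasLaw Z (gaussianReal 0 w) P)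
    (hindep : IndepFun Y Z P) :
    ∫ ω, max |Y ω| |Z ω| ∂P = √(2 * (v + w) / Real.pi) := by
  have hadd : HasLaw (fun ω ↦ Y ω + Z ω) (gaussianReal 0 (v + w)) P := by
    simpa [gaussianReal_conv_gaussianReal] using hindep.hasLaw_fun_add hY hZ
  have hsub : HasLaw (fun ω ↦ Y ω - Z ω) (gaussianReal 0 (v + w)) P := by
    simpa [gaussianReal_conv_gaussianReal, sub_eq_add_neg] using
      hindep.neg_right.hasLaw_fun_add hY (gaussianReal_neg hZ)
  simp only [max_abs_abs_eq_half_abs_add_add_abs_sub]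
  rw [integral_div, integral_add (integrable_abs_of_hasLaw_gaussianReal hadd)
    (integrable_abs_of_hasLaw_gaussianReal hsub), integral_abs_of_hasLaw_gaussianReal hadd,
    integral_abs_of_hasLaw_gaussianReal hsub, add_self_div_two, NNReal.coe_add]

variable {X : ι → Ω → ℝ}

lemma integral_iSup_abs_le_of_pairwise_indepFun [Nonempty ι]
    (hX : ∀ i, HasLaw (X i) (gaussianReal 0 1) P)
    (hindep : Pairwise fun i j ↦ IndepFun (X i) (X j) P) :
    ∫ ω, ⨆ j, |X j ω| ∂P ≤
      (2 * (Fintype.card ι - 1) - (Fintype.card ι - 2) * √2) / √Real.pi := by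
  classical
  have i : ι := Classical.arbitrary ι
  have hint (j : ι) := integrable_abs_of_hasLaw_gaussianReal (hX j)
  have hmean : ∫ ω, |X i ω| ∂P = √2 / √Real.pi := by
    rw [integral_abs_of_hasLaw_gaussianReal (hX i), NNReal.coe_one, mul_one,
      Real.sqrt_div zero_le_two]
  have hexcess (j : ι) (hj : j ≠ i) :
      ∫ ω, (|X j ω| - |X i ω|)⁺ ∂P = 2 / √Real.pi - √2 / √Real.pi := by
    have hmax (ω : Ω) : (|X j ω| - |X i ω|)⁺ = max |X j ω| |X i ω| - |X i ω| := by
      rw [posPart_def, ← max_sub_sub_right, sub_self]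
    have hmax_int : Integrable (fun ω ↦ max |X j ω| |X i ω|) P := (hint j).sup (hint i)
    simp only [hmax]
    rw [integral_sub hmax_int (hint i),
      integral_max_abs_of_indepFun_gaussianReal (hX j) (hX i) (hindep hj), hmean,
      Real.sqrt_div (by positivity)]
    norm_num
  refine (integral_iSup_le_add_sum_integral_posPart_sub hint (hint i)).trans_eq ?_
  rw [← Finset.sum_erase Finset.univ (a := i) (by simp),
    Finset.sum_congr rfl fun j hj ↦ hexcess j (Finset.ne_of_mem_erase hj), hmean,
    Finset.sum_const, Finset.card_erase_of_mem (Finset.mem_univ i), Finset.card_univ, nsmul_eq_mul,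
    Nat.cast_pred Fintype.card_pos]
  ring

lemma integral_iSup_abs_le_gaussianHazard (hX : ∀ i, HasLaw (X i) (gaussianReal 0 1) P) {t : ℝ}
    (ht : 0 ≤ t) (htail : 2 * Fintype.card ι * gaussianTail t = 1) :
    ∫ ω, ⨆ j, |X j ω| ∂P ≤ gaussianHazard t := by
  have : Nonempty ι := Fintype.card_pos_iff.1 <| Nat.pos_of_ne_zero fun hcard ↦ by
    simp [hcard] at htail
  have := (hX (Classical.arbitrary ι)).isProbabilityMeasure
  have hexcess (j : ι) : ∫ ω, (|X j ω| - t)⁺ ∂P =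
      2 * (gaussianPDFReal 0 1 t - t * gaussianTail t) := by
    rw [← integral_posPart_abs_sub_gaussianReal ht]
    exact (hX j).integral_comp (f := fun x ↦ (|x| - t)⁺) (by fun_prop)
  calc ∫ ω, ⨆ j, |X j ω| ∂P
      ≤ ∫ _, t ∂P + ∑ j, ∫ ω, (|X j ω| - t)⁺ ∂P :=
        integral_iSup_le_add_sum_integral_posPart_sub
          (fun j ↦ integrable_abs_of_hasLaw_gaussianReal (hX j)) (integrable_const t)
    _ = t + Fintype.card ι * (2 * (gaussianPDFReal 0 1 t - t * gaussianTail t)) := by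
        simp [hexcess]
    _ = gaussianHazard t := by
        rw [← gaussianHazard_mul_gaussianTail]
        linear_combination (gaussianHazard t - t) * htail

lemma integral_iSup_abs_le_of_four_le_card (hX : ∀ i, HasLaw (X i) (gaussianReal 0 1) P)
    (hι : 4 ≤ Fintype.card ι) :
    ∫ ω, ⨆ j, |X j ω| ∂P ≤ √(2 * Real.log (Fintype.card ι)) := by
  have hcard : (4 : ℝ) ≤ Fintype.card ι := by exact_mod_cast hι
  have hlevel : (2 * Fintype.card ι : ℝ)⁻¹ ≤ gaussianTail (9 / 8) := by
    calc (2 * Fintype.card ι : ℝ)⁻¹ ≤ (2 * 4)⁻¹ := by gcongr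
      _ ≤ 0.13 := by norm_num
      _ ≤ gaussianTail (9 / 8) := gaussianTail_nine_eighths_mem_Icc.1
  obtain ⟨t, ht, htail⟩ := exists_ge_gaussianTail_eq (by positivity) hlevel
  calc ∫ ω, ⨆ j, |X j ω| ∂P ≤ gaussianHazard t :=
        integral_iSup_abs_le_gaussianHazard hX (by linarith) (by rw [htail]; field_simp)
    _ ≤ √(-2 * Real.log (2 * gaussianTail t)) := gaussianHazard_le_sqrt_neg_two_mul_log ht
    _ = √(2 * Real.log (Fintype.card ι)) := by
        rw [htail, mul_inv, mul_inv_cancel_left₀ two_ne_zero, Real.log_inv, neg_mul_neg]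

lemma two_div_sqrt_pi_le : 2 / √Real.pi ≤ √(2 * Real.log 2) := by
  apply Real.le_sqrt_of_sq_le
  rw [div_pow, Real.sq_sqrt Real.pi_pos.le, div_le_iff₀ Real.pi_pos]
  nlinarith [Real.log_two_gt_d9, Real.pi_gt_three]

lemma four_sub_sqrt_two_div_sqrt_pi_le : (4 - √2) / √Real.pi ≤ √(2 * Real.log 3) := by
  have hsqrt : 1.414 ≤ √2 := Real.le_sqrt_of_sq_le (by norm_num)
  apply Real.le_sqrt_of_sq_le
  rw [div_pow, Real.sq_sqrt Real.pi_pos.le, div_le_iff₀ Real.pi_pos]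
  nlinarith [Real.log_three_gt_d9, Real.pi_gt_d2, Real.sq_sqrt zero_le_two]

theorem expected_max_abs_gaussian_le_general (hX : ∀ i, HasLaw (X i) (gaussianReal 0 1) P)
    (hindep : Pairwise fun i j ↦ IndepFun (X i) (X j) P) (hι : 2 ≤ Fintype.card ι) :
    ∫ ω, ⨆ j, |X j ω| ∂P ≤ √(2 * Real.log (Fintype.card ι)) := by
  obtain hsmall | hlarge := lt_or_ge (Fintype.card ι) 4
  · have : Nonempty ι := Fintype.card_pos_iff.1 (by lia)
    have hpair := integral_iSup_abs_le_of_pairwise_indepFun hX hindep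
    obtain hcard | hcard : Fintype.card ι = 2 ∨ Fintype.card ι = 3 := by lia
    · rw [hcard] at hpair ⊢
      refine hpair.trans (le_of_eq_of_le ?_ (mod_cast two_div_sqrt_pi_le))
      push_cast
      ring
    · rw [hcard] at hpair ⊢
      refine hpair.trans (le_of_eq_of_le ?_ (mod_cast four_sub_sqrt_two_div_sqrt_pi_le))
      push_cast
      ring
  · exact integral_iSup_abs_le_of_four_le_card hX hlarge

end RandomVariables

/-- The expected maximum absolute coordinate of an `n`-dimensional standard Gaussian
vector is at most `√(2 log n)`, for `n ≥ 2`. -/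
theorem expected_max_abs_gaussian_le (n : ℕ) (hn : 2 ≤ n) :
    ∫ g : Fin n → ℝ, (⨆ j, |g j|)
        ∂(Measure.pi fun _ : Fin n => gaussianReal 0 1)
      ≤ Real.sqrt (2 * Real.log n) := by
  have hindep := iIndepFun_pi (μ := fun _ : Fin n ↦ gaussianReal 0 1) (X := fun _ x ↦ x)
    fun _ ↦ aemeasurable_id
  simpa using expected_max_abs_gaussian_le_general
    (fun i ↦ (measurePreserving_eval (fun _ : Fin n ↦ gaussianReal 0 1) i).hasLaw)
    (fun _ _ hij ↦ hindep.indepFun hij) (by simpa using hn)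
end

section
/- Let n ≥ 1, m ≥ 1, and ε, κ, λ > 0. Let f : ℝⁿ → ℝ and g₁, …, g_m : ℝⁿ → ℝ satisfy the Lipschitz conditions |f(x) − f(y)| ≤ κ‖x − y‖_∞ and |gᵢ(x) − gᵢ(y)| ≤ κ‖x − y‖_∞ for all x, y ∈ ℝⁿ and all i. Suppose x* minimizes f over the feasible set {x ∈ ℝⁿ : gᵢ(x) ≤ 0 for all i, ‖x‖₁ ≤ λ}. Then there exists z ∈ ℤⁿ such that the point x̂ = (ε/κ)·z satisfies ‖x̂‖₁ ≤ λ, f(x̂) ≤ f(x*) + ε, and gᵢ(x̂) ≤ ε for all i ∈ {1, …, m}. -/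
/-!
Round every coordinate of `x*` toward zero to a multiple of `ε / κ`. Rounding toward zero, rather
than to the nearest multiple, never increases the absolute value of a coordinate, so the point
stays in the ℓ1-ball; each coordinate moves by at most `ε / κ`, so a `κ`-Lipschitz function changes
by at most `ε`. The rounded point depends on `x*` and `ε / κ` only, so it serves `f` and all `g j`
at once.
-/

theorem exists_abs_zsmul_le_and_abs_zsmul_sub_lt {G : Type*} [AddCommGroup G] [LinearOrder G]
    [IsOrderedAddMonoid G] [Archimedean G] {d : G} (hd : 0 < d) (x : G) :
    ∃ k : ℤ, |k • d| ≤ |x| ∧ |k • d - x| < d := by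
  obtain ⟨k, ⟨hk_le, hk_lt⟩, -⟩ := existsUnique_zsmul_near_of_pos hd |x|
  have hk_nonneg : 0 ≤ k := by
    rw [← Int.lt_add_one_iff, ← zsmul_lt_zsmul_iff_left hd, zero_zsmul]
    exact (abs_nonneg x).trans_lt hk_lt
  have habs_le : |k • d| ≤ |x| := by rwa [abs_of_nonneg (zsmul_nonneg hd.le hk_nonneg)]
  have hsub_lt : |k • d - (|x|)| < d := by
    rw [abs_sub_comm, abs_of_nonneg (sub_nonneg.2 hk_le), sub_lt_iff_lt_add']
    rwa [add_one_zsmul] at hk_lt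
  rcases abs_choice x with hx | hx
  · exact ⟨k, habs_le, by rwa [hx] at hsub_lt⟩
  · refine ⟨-k, by rwa [neg_zsmul, abs_neg], ?_⟩
    rwa [hx, sub_neg_eq_add, ← abs_neg, neg_add, ← neg_zsmul, ← sub_eq_add_neg] at hsub_lt

theorem exists_int_sum_abs_mul_le_and_iSup_abs_mul_sub_le {ι : Type*} [Fintype ι] {d : ℝ}
    (hd : 0 < d) (x : ι → ℝ) :
    ∃ z : ι → ℤ, ∑ i, |d * (z i : ℝ)| ≤ ∑ i, |x i| ∧ (⨆ i, |d * (z i : ℝ) - x i|) ≤ d := by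
  choose z hz_abs hz_sub using fun i => exists_abs_zsmul_le_and_abs_zsmul_sub_lt hd (x i)
  simp only [zsmul_eq_mul'] at hz_abs hz_sub
  exact ⟨z, Finset.sum_le_sum fun i _ => hz_abs i, Real.iSup_le (fun i => (hz_sub i).le) hd.le⟩

theorem ptas_lipschitz_l1_ball_general {ι : Type*} [Fintype ι] {ε κ : ℝ} (hε : 0 < ε) (hκ : 0 < κ)
    (x : ι → ℝ) :
    ∃ z : ι → ℤ, ∑ i, |ε / κ * (z i : ℝ)| ≤ ∑ i, |x i| ∧
      ∀ f : (ι → ℝ) → ℝ, (∀ u v : ι → ℝ, |f u - f v| ≤ κ * ⨆ i, |u i - v i|) →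
        |f (fun i => ε / κ * (z i : ℝ)) - f x| ≤ ε := by
  obtain ⟨z, hz_l1, hz_sup⟩ :=
    exists_int_sum_abs_mul_le_and_iSup_abs_mul_sub_le (div_pos hε hκ) x
  refine ⟨z, hz_l1, fun f hf => ?_⟩
  calc |f (fun i => ε / κ * (z i : ℝ)) - f x|
      ≤ κ * ⨆ i, |ε / κ * (z i : ℝ) - x i| := hf _ _
    _ ≤ κ * (ε / κ) := by gcongr
    _ = ε := mul_div_cancel₀ ε hκ.ne'

/-- Additive PTAS guarantee: if `f` and the constraints `g i` are `κ`-Lipschitz with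
respect to the ℓ∞-norm and `x*` minimizes `f` over `{x : g(x) ≤ 0, ‖x‖₁ ≤ λ}`, then
some scaled grid point `x̂ = (ε/κ)z`, `z ∈ ℤⁿ`, satisfies `‖x̂‖₁ ≤ λ`,
`f(x̂) ≤ f(x*) + ε`, and `g i (x̂) ≤ ε` for all `i`. -/
theorem ptas_lipschitz_l1_ball (n m : ℕ) (hn : 1 ≤ n) (hm : 1 ≤ m)
    (ε κ lam : ℝ) (hε : 0 < ε) (hκ : 0 < κ) (hlam : 0 < lam)
    (f : (Fin n → ℝ) → ℝ) (g : Fin m → (Fin n → ℝ) → ℝ)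
    (hf : ∀ x y : Fin n → ℝ, |f x - f y| ≤ κ * ⨆ i, |x i - y i|)
    (hg : ∀ j, ∀ x y : Fin n → ℝ, |g j x - g j y| ≤ κ * ⨆ i, |x i - y i|)
    (xstar : Fin n → ℝ)
    (hg_star : ∀ j, g j xstar ≤ 0) (hl1_star : ∑ i, |xstar i| ≤ lam)
    (hopt : ∀ x : Fin n → ℝ, (∀ j, g j x ≤ 0) → (∑ i, |x i| ≤ lam) → f xstar ≤ f x) :
    ∃ z : Fin n → ℤ,
      (∑ i, |ε / κ * (z i : ℝ)|) ≤ lam ∧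
      f (fun i => ε / κ * (z i : ℝ)) ≤ f xstar + ε ∧
      (∀ j, g j (fun i => ε / κ * (z i : ℝ)) ≤ ε) := by
  obtain ⟨z, hz_l1, hz⟩ := ptas_lipschitz_l1_ball_general hε hκ xstar
  exact ⟨z, hz_l1.trans hl1_star, by linarith [le_of_abs_le (hz f hf)],
    fun j => by linarith [le_of_abs_le (hz (g j) (hg j)), hg_star j]⟩
end
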